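/- Let B⁺ be the positive braid monoid of a finite Coxeter system and Δ its Garside element (the positive lift of the longest element w₀). Then for every x ∈ B⁺ there exist y ∈ B⁺ and m ∈ ℤ_{≥0} such that x y = Δ^m; that is, every positive braid left-divides a power of the Garside element. -/

import Mathlib

/-- The alternating word `i j i j ⋯` of length `m`, as an element of the free monoid. -/
def altWord {B : Type*} (i j : B) (m : ℕ) : FreeMonoid B :=
  FreeMonoid.ofList ((List.range m).map fun t => if t % 2 = 0 then i else j)

/-- The braid relations of a Coxeter matrix `M`, as a relation on the free monoid:
for `i ≠ j`, the alternating words `i j i ⋯` and `j i j ⋯` of length `M i j` coincide. -/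
def braidRel {B : Type*} (M : CoxeterMatrix B) : FreeMonoid B → FreeMonoid B → Prop :=
  fun a b => ∃ i j : B, i ≠ j ∧ a = altWord i j (M i j) ∧ b = altWord j i (M i j)

/-- The positive braid monoid (Artin–Tits monoid) `B⁺` attached to a Coxeter matrix `M`:
the free monoid on the generators modulo the braid relations. -/
abbrev ArtinTitsMonoid {B : Type*} (M : CoxeterMatrix B) :=
  (conGen (braidRel M)).Quotient

/-- The generator `r_i ∈ B⁺`. -/
def atGen {B : Type*} (M : CoxeterMatrix B) (i : B) : ArtinTitsMonoid M :=
  (conGen (braidRel M)).mk' (FreeMonoid.of i)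

/-!
In the Tits representation `sᵢ sⱼ` acts as a product of two reflections whose order is computed with
Chebyshev polynomials, so it has order exactly `M i j` in `W`. The action of `W` on pairs of a
reflection and a sign gives a cocycle detecting inversions, hence the strong exchange property.
Exchanging letters one at a time shows that an element with right descents `i` and `j` has a reduced
word ending in the braid word of `i` and `j`, and Matsumoto's theorem follows.

By Matsumoto's theorem, `Δ` is represented by every reduced word of `w₀`. Conjugation by `w₀`
permutes the simple reflections, `sᵢ w₀ = w₀ sⱼ`, so a reduced word of `sᵢ w₀` represents a braid
`u` with `rᵢ u = Δ = u rⱼ`. Thus `rᵢ Δ = Δ rⱼ`: the letters of `x` can be moved past powers of `Δ`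
one by one, each then being completed to one more factor `Δ`.
-/

section Dihedral

open Module Polynomial.Chebyshev Real

theorem reflection_mul_reflection_pow_apply_left {R V : Type*} [CommRing R] [AddCommGroup V]
    [Module R V] {x y : V} {f g : Dual R V} (hf : f x = 2) (hg : g y = 2) {c : R}
    (hfy : f y = -c) (hgx : g x = -c) (k : ℕ) :
    ((reflection hf * reflection hg) ^ k) x =
      (S R (2 * k)).eval c • x + (S R (2 * k - 1)).eval c • y := by
  induction k with
  | zero => simp
  | succ k ih =>
    have hS₁ : (S R (2 * k + 1)).eval c =
        c * (S R (2 * k)).eval c - (S R (2 * k - 1)).eval c := by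
      rw [S_add_one, Polynomial.eval_sub, Polynomial.eval_mul, Polynomial.eval_X]
    have hS₂ : (S R (2 * k + 2)).eval c =
        c * (S R (2 * k + 1)).eval c - (S R (2 * k)).eval c := by
      rw [S_add_two, Polynomial.eval_sub, Polynomial.eval_mul, Polynomial.eval_X]
    rw [pow_succ', LinearEquiv.mul_apply, ih, LinearEquiv.mul_apply]
    push_cast
    rw [show (2 * (k + 1) : ℤ) = 2 * k + 2 by ring,
      show (2 * k + 2 - 1 : ℤ) = 2 * k + 1 by ring, hS₂, hS₁]
    simp only [map_add, map_smul, reflection_apply, hf, hg, hfy, hgx, map_sub]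
    module

theorem linearEquiv_eq_one_of_fixes_roots_of_fixes_ker_coroots {K V : Type*} [Field K]
    [AddCommGroup V] [Module K V] {x y : V} {f g : Dual K V} (hf : f x = 2) (hg : g y = 2) {c : K}
    (hfy : f y = -c) (hgx : g x = -c) (hc : 4 - c ^ 2 ≠ 0) {φ : V ≃ₗ[K] V}
    (hx : φ x = x) (hy : φ y = y) (hker : ∀ v, f v = 0 → g v = 0 → φ v = v) : φ = 1 := by
  ext v
  set a := (2 * f v + c * g v) / (4 - c ^ 2) with ha
  set b := (c * f v + 2 * g v) / (4 - c ^ 2) with hb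
  have hfu : f (v - (a • x + b • y)) = 0 := by
    simp only [map_sub, map_add, map_smul, hf, hfy, smul_eq_mul, ha, hb]
    field_simp
    ring
  have hgu : g (v - (a • x + b • y)) = 0 := by
    simp only [map_sub, map_add, map_smul, hg, hgx, smul_eq_mul, ha, hb]
    field_simp
    ring
  have hu := hker _ hfu hgu
  rwa [map_sub, map_add, map_smul, map_smul, hx, hy, sub_left_inj] at hu

variable {V : Type*} [AddCommGroup V] [Module ℝ V] {x y : V} {f g : Dual ℝ V}

theorem reflection_mul_reflection_pow_apply_left_eq_iff (hf : f x = 2) (hg : g y = 2) {θ : ℝ}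
    (hfy : f y = -(2 * cos θ)) (hgx : g x = -(2 * cos θ)) (hθ : sin θ ≠ 0) (k : ℕ) :
    ((reflection hf * reflection hg) ^ k) x = x ↔ cos (2 * k * θ) = 1 := by
  have hS := S_two_mul_real_cos θ (2 * k)
  have hS' := S_two_mul_real_cos θ (2 * k - 1)
  push_cast at hS hS'
  rw [add_mul, one_mul, sin_add] at hS
  rw [sub_add_cancel] at hS'
  rw [reflection_mul_reflection_pow_apply_left hf hg hfy hgx]
  constructor
  · intro h
    have hfx := congrArg f h
    simp only [map_add, map_smul, hf, hfy, smul_eq_mul] at hfx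
    apply mul_right_cancel₀ hθ
    linear_combination sin θ / 2 * hfx - hS + cos θ * hS'
  · intro h
    have hsin : sin (2 * k * θ) = 0 := by
      nlinarith [sin_sq_add_cos_sq (2 * k * θ)]
    rw [h, hsin, zero_mul, zero_add, one_mul] at hS
    rw [hsin] at hS'
    rw [mul_right_cancel₀ hθ (hS.trans (one_mul _).symm), (mul_eq_zero.mp hS').resolve_right hθ,
      one_smul, zero_smul, add_zero]

theorem reflection_mul_reflection_pow_eq_one_iff (hf : f x = 2) (hg : g y = 2) {θ : ℝ}
    (hfy : f y = -(2 * cos θ)) (hgx : g x = -(2 * cos θ)) (hθ : sin θ ≠ 0) (k : ℕ) :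
    (reflection hf * reflection hg) ^ k = 1 ↔ cos (2 * k * θ) = 1 := by
  refine ⟨fun h ↦ ?_, fun h ↦ ?_⟩
  · rw [← reflection_mul_reflection_pow_apply_left_eq_iff hf hg hfy hgx hθ, h,
      LinearEquiv.coe_one, id]
  · have hx := (reflection_mul_reflection_pow_apply_left_eq_iff hf hg hfy hgx hθ k).mpr h
    have hy := (reflection_mul_reflection_pow_apply_left_eq_iff hg hf hgx hfy hθ k).mpr h
    have hinv : (reflection hg * reflection hf) ^ k = ((reflection hf * reflection hg) ^ k)⁻¹ := by
      rw [← inv_pow, mul_inv_rev, reflection_inv, reflection_inv]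
    rw [hinv] at hy
    have hc : 4 - (2 * cos θ) ^ 2 ≠ 0 := by
      rw [show 4 - (2 * cos θ) ^ 2 = (2 * sin θ) ^ 2 by rw [mul_pow, mul_pow, sin_sq]; ring]
      positivity
    refine linearEquiv_eq_one_of_fixes_roots_of_fixes_ker_coroots hf hg hfy hgx hc hx
      ((LinearEquiv.symm_apply_eq _).mp hy).symm fun v hfv hgv ↦ ?_
    have hv : (reflection hf * reflection hg) v = v := by
      simp [reflection_apply, hfv, hgv]
    rw [LinearEquiv.pow_apply]
    exact Function.iterate_fixed hv k

theorem cos_two_mul_nat_mul_pi_div_eq_one_iff {m : ℕ} (hm : m ≠ 0) (k : ℕ) :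
    cos (2 * k * (π / m)) = 1 ↔ m ∣ k := by
  have hangle (n : ℤ) : n * (2 * π) = 2 * k * (π / m) ↔ (k : ℤ) = m * n := by
    rw [← @Int.cast_inj ℝ]
    push_cast
    field_simp
    rw [eq_comm, mul_comm]
  rw [cos_eq_one_iff, ← Int.natCast_dvd_natCast]
  exact exists_congr hangle

theorem orderOf_reflection_mul_reflection (hf : f x = 2) (hg : g y = 2) {m : ℕ} (hm : 2 ≤ m)
    (hfy : f y = -(2 * cos (π / m))) (hgx : g x = -(2 * cos (π / m))) :
    orderOf (reflection hf * reflection hg) = m := by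
  have hsin : sin (π / m) ≠ 0 :=
    (sin_pos_of_pos_of_lt_pi (by positivity)
      (div_lt_self pi_pos (by exact_mod_cast hm))).ne'
  refine Nat.dvd_right_iff_eq.mp fun k ↦ ?_
  rw [orderOf_dvd_iff_pow_eq_one, reflection_mul_reflection_pow_eq_one_iff hf hg hfy hgx hsin,
    cos_two_mul_nat_mul_pi_div_eq_one_iff (by omega)]

theorem orderOf_reflection_mul_reflection_eq_zero {R V : Type*} [CommRing R] [CharZero R]
    [IsDomain R] [AddCommGroup V] [Module R V] [IsTorsionFree R V] {x y : V} {f g : Dual R V}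
    (hf : f x = 2) (hg : g y = 2) (hfy : f y = -2) (hgx : g x = -2) (hxy : x + y ≠ 0) :
    orderOf (reflection hf * reflection hg) = 0 := by
  refine orderOf_eq_zero_iff'.mpr fun k hk h ↦ ?_
  have hx := reflection_mul_reflection_pow_apply_left hf hg hfy hgx k
  rw [h, S_eval_two, S_eval_two, LinearEquiv.coe_one, id] at hx
  push_cast at hx
  have hsmul : (2 * k : R) • (x + y) = 0 := by
    rw [← neg_eq_zero, ← sub_eq_zero.mpr hx]
    module
  rcases smul_eq_zero.mp hsmul with h | h
  · simp [hk.ne'] at h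
  · exact hxy h

end Dihedral

section TitsRepresentation

open Module Real

variable {B : Type*} (M : CoxeterMatrix B)

/-- The coroot `αᵢ^∨` of the Tits representation of `M`: the linear form
`αⱼ ↦ -2 cos (π / M i j)` on the space with basis the simple roots `αⱼ`. An infinite bond is
encoded by `M i j = 0`, and then the junk value `π / 0 = 0` gives the correct entry `-2`. -/
noncomputable def titsCoroot (i : B) : Dual ℝ (B →₀ ℝ) :=
  Finsupp.linearCombination ℝ fun j ↦ -(2 * cos (π / M i j))

theorem titsCoroot_single (i j : B) :
    titsCoroot M i (Finsupp.single j 1) = -(2 * cos (π / M i j)) := by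
  rw [titsCoroot, Finsupp.linearCombination_single, one_smul]

theorem titsCoroot_single_self (i : B) : titsCoroot M i (Finsupp.single i 1) = 2 := by
  simp [titsCoroot_single]

/-- The reflection by which the generator `sᵢ` acts in the Tits representation of `M`. -/
noncomputable def titsReflection (i : B) : (B →₀ ℝ) ≃ₗ[ℝ] (B →₀ ℝ) :=
  reflection (titsCoroot_single_self M i)

theorem orderOf_titsReflection_mul_titsReflection (i j : B) :
    orderOf (titsReflection M i * titsReflection M j) = M i j := by
  have hji : titsCoroot M j (Finsupp.single i 1) = -(2 * cos (π / M i j)) := by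
    rw [titsCoroot_single, M.symmetric]
  rcases eq_or_ne i j with rfl | hij
  · rw [titsReflection, mul_eq_one_iff_eq_inv.mpr (reflection_inv _).symm, orderOf_one, M.diagonal]
  · have hM := M.off_diagonal i j hij
    obtain h0 | h2 : M i j = 0 ∨ 2 ≤ M i j := by omega
    · rw [h0]
      refine orderOf_reflection_mul_reflection_eq_zero _ _ ?_ ?_ fun h ↦ ?_
      · simp [titsCoroot_single, h0]
      · simp [hji, h0]
      · simpa [hij.symm] using DFunLike.congr_fun h i
    · exact orderOf_reflection_mul_reflection _ _ h2 (titsCoroot_single M i j) hji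

theorem isLiftable_titsReflection : M.IsLiftable (titsReflection M) := fun i j ↦ by
  rw [← orderOf_titsReflection_mul_titsReflection, pow_orderOf_eq_one]

theorem orderOf_simple_mul_simple {W : Type*} [Group W] {M : CoxeterMatrix B}
    (cs : CoxeterSystem M W) (i j : B) : orderOf (cs.simple i * cs.simple j) = M i j := by
  refine Nat.dvd_antisymm (orderOf_dvd_of_pow_eq_one (cs.simple_mul_simple_pow i j)) ?_
  have h := orderOf_map_dvd (cs.lift ⟨_, isLiftable_titsReflection M⟩)
    (cs.simple i * cs.simple j)
  rwa [map_mul, cs.lift_apply_simple, cs.lift_apply_simple,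
    orderOf_titsReflection_mul_titsReflection] at h

end TitsRepresentation

section StrongExchange

open CoxeterSystem

theorem prod_map_alternatingWord_two_mul {B G : Type*} [Monoid G] (f : B → G) (i j : B) (m : ℕ) :
    ((alternatingWord i j (2 * m)).map f).prod = (f i * f j) ^ m := by
  induction m with
  | zero => simp [alternatingWord]
  | succ m ih =>
    rw [mul_add_one, alternatingWord_succ, alternatingWord_succ]
    simp [ih, pow_succ]

variable {B W : Type*} [Group W] {M : CoxeterMatrix B} (cs : CoxeterSystem M W)

theorem rightInvSeq_alternatingWord (i j : B) (m : ℕ) :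
    cs.rightInvSeq (alternatingWord i j m) =
      ((List.range m).map fun k ↦ cs.simple j * (cs.simple i * cs.simple j) ^ k).reverse := by
  induction m generalizing i j with
  | zero => rfl
  | succ m ih =>
    have hconj (k : ℕ) : cs.simple j * (cs.simple i * (cs.simple j * cs.simple i) ^ k) *
        cs.simple j = cs.simple j * (cs.simple i * cs.simple j) ^ (k + 1) := by
      rw [← mul_pow_mul, pow_succ]
      simp only [mul_assoc]
    rw [alternatingWord_succ, rightInvSeq_concat, ih, List.range_succ_eq_map]
    simp [hconj, Function.comp_def]

section InversionCocycle

variable [DecidableEq W]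

/-- The involution `(t, ε) ↦ (sᵢ t sᵢ, ε + [t = sᵢ])` of `W × ℤ/2`, which records in its second
component whether conjugation by `sᵢ` makes the reflection `t` change sign. -/
def signedConj (i : B) : Equiv.Perm (W × ZMod 2) :=
  Function.Involutive.toPerm
    (fun p ↦ (cs.simple i * p.1 * cs.simple i, p.2 + if p.1 = cs.simple i then 1 else 0)) <| by
      rintro ⟨t, ε⟩
      have h : cs.simple i * t * cs.simple i = cs.simple i ↔ t = cs.simple i := by
        rw [mul_eq_right, mul_eq_one_iff_inv_eq, cs.inv_simple, eq_comm]
      ext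
      · simp [mul_assoc]
      · simp only [h, add_assoc, CharTwo.add_self_eq_zero, add_zero]

theorem signedConj_apply (i : B) (t : W) (ε : ZMod 2) :
    signedConj cs i (t, ε) =
      (cs.simple i * t * cs.simple i, ε + if t = cs.simple i then 1 else 0) := rfl

theorem prod_map_signedConj_apply (ω : List B) (t : W) (ε : ZMod 2) :
    (ω.map (signedConj cs)).prod (t, ε) =
      (cs.wordProd ω * t * (cs.wordProd ω)⁻¹, ε + (cs.rightInvSeq ω).count t) := by
  induction ω with
  | nil => simp
  | cons i ω ih =>
    have h : cs.wordProd ω * t * (cs.wordProd ω)⁻¹ = cs.simple i ↔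
        (cs.wordProd ω)⁻¹ * cs.simple i * cs.wordProd ω = t := by
      rw [mul_inv_eq_iff_eq_mul, mul_assoc, inv_mul_eq_iff_eq_mul, eq_comm]
    rw [List.map_cons, List.prod_cons, Equiv.Perm.mul_apply, ih, signedConj_apply,
      cs.wordProd_cons, rightInvSeq, List.count_cons]
    ext
    · simp [mul_assoc]
    · simp [h, add_assoc]

-- The inversions of the relator `(sᵢ sⱼ) ^ M i j` come in `M i j` pairs of equal reflections.
theorem isLiftable_signedConj : M.IsLiftable (signedConj cs) := by
  intro i j
  have hword : cs.wordProd (alternatingWord i j (2 * M i j)) = 1 := by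
    rw [wordProd, prod_map_alternatingWord_two_mul, cs.simple_mul_simple_pow]
  have hcount (t : W) :
      ((cs.rightInvSeq (alternatingWord i j (2 * M i j))).count t : ZMod 2) = 0 := by
    rw [rightInvSeq_alternatingWord, two_mul, List.range_add]
    simp [pow_add, Function.comp_def, CharTwo.add_self_eq_zero]
  ext1 ⟨t, ε⟩
  rw [← prod_map_alternatingWord_two_mul, prod_map_signedConj_apply, hword, hcount]
  simp

/-- The action of `W` on `W × ℤ/2` in which `sᵢ` acts by `signedConj cs i`. -/
def signedConjHom : W →* Equiv.Perm (W × ZMod 2) :=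
  cs.lift ⟨_, isLiftable_signedConj cs⟩

/-- The inversion cocycle: for a reflection `t` of `W`, the class mod 2 which is `1` exactly
when `t` is a right inversion of `w`. -/
def inversionSign (w t : W) : ZMod 2 := (signedConjHom cs w (t, 0)).2

theorem signedConjHom_wordProd (ω : List B) :
    signedConjHom cs (cs.wordProd ω) = (ω.map (signedConj cs)).prod := by
  rw [wordProd, map_list_prod, List.map_map]
  exact congrArg _ (List.map_congr_left fun i _ ↦ cs.lift_apply_simple _ i)

theorem inversionSign_wordProd (ω : List B) (t : W) :
    inversionSign cs (cs.wordProd ω) t = (cs.rightInvSeq ω).count t := by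
  rw [inversionSign, signedConjHom_wordProd, prod_map_signedConj_apply, zero_add]

theorem signedConjHom_apply (w t : W) (ε : ZMod 2) :
    signedConjHom cs w (t, ε) = (w * t * w⁻¹, ε + inversionSign cs w t) := by
  obtain ⟨ω, rfl⟩ := cs.wordProd_surjective w
  rw [signedConjHom_wordProd, prod_map_signedConj_apply, inversionSign_wordProd]

theorem inversionSign_mul (w₁ w₂ t : W) :
    inversionSign cs (w₁ * w₂) t =
      inversionSign cs w₂ t + inversionSign cs w₁ (w₂ * t * w₂⁻¹) := by
  rw [inversionSign, map_mul, Equiv.Perm.mul_apply, signedConjHom_apply, signedConjHom_apply,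
    zero_add]

theorem inversionSign_self {t : W} (ht : cs.IsReflection t) : inversionSign cs t t = 1 := by
  obtain ⟨w, i, rfl⟩ := ht
  have hone : inversionSign cs 1 (w * cs.simple i * w⁻¹) = 0 := by simp [inversionSign]
  have hsimple : inversionSign cs (cs.simple i) (cs.simple i) = 1 := by
    simpa using inversionSign_wordProd cs [i] (cs.simple i)
  have hcancel := inversionSign_mul cs w w⁻¹ (w * cs.simple i * w⁻¹)
  have hconj : w⁻¹ * (w * cs.simple i * w⁻¹) * w⁻¹⁻¹ = cs.simple i := by group
  rw [mul_inv_cancel, hone, hconj] at hcancel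
  rw [inversionSign_mul, hconj, inversionSign_mul, mul_inv_cancel_right, hsimple]
  linear_combination -hcancel

theorem mem_rightInvSeq_of_inversionSign_eq_one {ω : List B} {t : W}
    (h : inversionSign cs (cs.wordProd ω) t = 1) : t ∈ cs.rightInvSeq ω := by
  rw [inversionSign_wordProd] at h
  by_contra hmem
  rw [List.count_eq_zero_of_not_mem hmem] at h
  exact absurd h (by decide)

theorem isRightInversion_of_inversionSign_eq_one {w t : W} (h : inversionSign cs w t = 1) :
    cs.IsRightInversion w t := by
  obtain ⟨ω, hω, rfl⟩ := cs.exists_isReduced w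
  exact cs.isRightInversion_of_mem_rightInvSeq hω (mem_rightInvSeq_of_inversionSign_eq_one cs h)

theorem inversionSign_eq_one_iff {w t : W} (ht : cs.IsReflection t) :
    inversionSign cs w t = 1 ↔ cs.IsRightInversion w t := by
  refine ⟨isRightInversion_of_inversionSign_eq_one cs, fun hinv ↦ ?_⟩
  by_contra hne
  have hzero : inversionSign cs w t = 0 := by_contra fun h ↦ hne (Fin.eq_one_of_ne_zero _ h)
  have hmul : inversionSign cs (w * t) t = 1 := by
    rw [inversionSign_mul, inversionSign_self cs ht, mul_inv_cancel_right, hzero, add_zero]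
  exact ht.not_isRightInversion_mul_left_iff.mpr hinv
    (isRightInversion_of_inversionSign_eq_one cs hmul)

end InversionCocycle

theorem isRightInversion_mul_iff {t : W} (ht : cs.IsReflection t) (w₁ w₂ : W) :
    cs.IsRightInversion (w₁ * w₂) t ↔
      Xor (cs.IsRightInversion w₂ t) (cs.IsRightInversion w₁ (w₂ * t * w₂⁻¹)) := by
  classical
  rw [← inversionSign_eq_one_iff cs ht, ← inversionSign_eq_one_iff cs ht,
    ← inversionSign_eq_one_iff cs (ht.conj w₂), inversionSign_mul]
  generalize inversionSign cs w₂ t = a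
  generalize inversionSign cs w₁ (w₂ * t * w₂⁻¹) = b
  revert a b
  decide

theorem mem_rightInvSeq_of_isRightInversion {ω : List B} {t : W}
    (h : cs.IsRightInversion (cs.wordProd ω) t) : t ∈ cs.rightInvSeq ω := by
  classical
  exact mem_rightInvSeq_of_inversionSign_eq_one cs ((inversionSign_eq_one_iff cs h.1).mpr h)

theorem exists_wordProd_mul_eq_wordProd_eraseIdx {ω : List B} {t : W}
    (h : cs.IsRightInversion (cs.wordProd ω) t) :
    ∃ k < ω.length, cs.wordProd ω * t = cs.wordProd (ω.eraseIdx k) := by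
  obtain ⟨k, hk, rfl⟩ := List.mem_iff_getElem.mp (mem_rightInvSeq_of_isRightInversion cs h)
  rw [length_rightInvSeq] at hk
  refine ⟨k, hk, ?_⟩
  rw [← wordProd_mul_getD_rightInvSeq, List.getD_eq_getElem]

end StrongExchange

section LongestElement

open CoxeterSystem

variable {B W : Type*} [Group W] {M : CoxeterMatrix B} (cs : CoxeterSystem M W) {w₀ : W}

theorem isRightInversion_longest (hw₀ : ∀ w : W, cs.length w ≤ cs.length w₀) {t : W}
    (ht : cs.IsReflection t) : cs.IsRightInversion w₀ t :=
  ⟨ht, (hw₀ _).lt_of_ne (ht.length_mul_left_ne w₀)⟩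

theorem length_longest_mul_add_length (hw₀ : ∀ w : W, cs.length w ≤ cs.length w₀) (w : W) :
    cs.length (w₀ * w) + cs.length w = cs.length w₀ := by
  induction hn : cs.length w generalizing w with
  | zero => rw [cs.length_eq_zero_iff.mp hn, mul_one, add_zero]
  | succ n ih =>
    have hw : w ≠ 1 := by
      rintro rfl
      simp at hn
    obtain ⟨i, hi⟩ := cs.exists_rightDescent_of_ne_one hw
    have hlen := cs.isRightDescent_iff.mp hi
    have hu : ¬cs.IsRightInversion (w * cs.simple i) (cs.simple i) := by
      rwa [isRightInversion_simple_iff_isRightDescent,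
        ← isRightDescent_iff_not_isRightDescent_mul]
    have hdesc : cs.IsRightDescent (w₀ * (w * cs.simple i)) i := by
      rw [← isRightInversion_simple_iff_isRightDescent,
        isRightInversion_mul_iff cs (cs.isReflection_simple i)]
      exact .inr ⟨isRightInversion_longest cs hw₀ ((cs.isReflection_simple i).conj _), hu⟩
    have hlen₀ := cs.isRightDescent_iff.mp hdesc
    rw [mul_assoc, cs.simple_mul_simple_cancel_right] at hlen₀
    have := ih (w * cs.simple i) (by omega)
    omega

theorem length_simple_mul_longest_add_one (hw₀ : ∀ w : W, cs.length w ≤ cs.length w₀) (i : B) :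
    cs.length (cs.simple i * w₀) + 1 = cs.length w₀ :=
  cs.isLeftDescent_iff.mp ((hw₀ _).lt_of_ne (cs.length_simple_mul_ne w₀ i))

theorem exists_simple_mul_longest_eq_longest_mul_simple
    (hw₀ : ∀ w : W, cs.length w ≤ cs.length w₀) (i : B) :
    ∃ j, cs.simple i * w₀ = w₀ * cs.simple j := by
  have hinv := length_longest_mul_add_length cs (w₀ := w₀⁻¹) (by simpa using hw₀)
    (cs.simple i * w₀)
  have hconj : cs.length (w₀⁻¹ * (cs.simple i * w₀)) = 1 := by
    have := length_simple_mul_longest_add_one cs hw₀ i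
    rw [cs.length_inv] at hinv
    omega
  obtain ⟨j, hj⟩ := cs.length_eq_one_iff.mp hconj
  exact ⟨j, inv_mul_eq_iff_eq_mul.mp hj⟩

end LongestElement

section Matsumoto

open CoxeterSystem

variable {B W : Type*} [Group W] {M : CoxeterMatrix B} (cs : CoxeterSystem M W)

theorem not_isRightDescent_wordProd_alternatingWord {i j : B} {k : ℕ}
    (hk : M i j = 0 ∨ k < M i j) : ¬cs.IsRightDescent (cs.wordProd (alternatingWord i j k)) i := by
  intro hi
  rw [← isRightInversion_simple_iff_isRightDescent] at hi
  have hmem := mem_rightInvSeq_of_isRightInversion cs hi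
  rw [rightInvSeq_alternatingWord, List.mem_reverse, List.mem_map] at hmem
  obtain ⟨p, hp, hpi⟩ := hmem
  have hpow : (cs.simple i * cs.simple j) ^ (p + 1) = 1 := by
    rw [pow_succ', mul_assoc, hpi, cs.simple_mul_simple_self]
  have hdvd : M i j ∣ p + 1 := orderOf_simple_mul_simple cs i j ▸ orderOf_dvd_of_pow_eq_one hpow
  rw [List.mem_range] at hp
  obtain h0 | hlt := hk
  · rw [h0, zero_dvd_iff] at hdvd
    omega
  · have := Nat.le_of_dvd p.succ_pos hdvd
    omega

-- Exchanging against `sᵢ` deletes a letter of `ν`, since `sᵢ` is no descent of the alternating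
-- suffix.
theorem exists_isReduced_append_alternatingWord_succ {i j : B} {k : ℕ}
    (hk : M i j = 0 ∨ k < M i j) {ν : List B} (hν : cs.IsReduced (ν ++ alternatingWord i j k))
    (hi : cs.IsRightDescent (cs.wordProd (ν ++ alternatingWord i j k)) i) :
    ∃ ν' : List B, cs.IsReduced (ν' ++ alternatingWord j i (k + 1)) ∧
      cs.wordProd (ν' ++ alternatingWord j i (k + 1)) =
        cs.wordProd (ν ++ alternatingWord i j k) := by
  set a := cs.wordProd (alternatingWord i j k) with ha
  have hνinv : cs.IsRightInversion (cs.wordProd ν) (a * cs.simple i * a⁻¹) := by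
    rw [← isRightInversion_simple_iff_isRightDescent, cs.wordProd_append,
      isRightInversion_mul_iff cs (cs.isReflection_simple i),
      isRightInversion_simple_iff_isRightDescent] at hi
    exact (hi.resolve_left fun h ↦ not_isRightDescent_wordProd_alternatingWord cs hk h.1).1
  obtain ⟨q, hq, hexch⟩ := exists_wordProd_mul_eq_wordProd_eraseIdx cs hνinv
  have hprod : cs.wordProd (ν.eraseIdx q ++ alternatingWord j i (k + 1)) =
      cs.wordProd (ν ++ alternatingWord i j k) := by
    rw [alternatingWord_succ, cs.wordProd_append, cs.wordProd_concat, cs.wordProd_append, ← hexch,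
      ← ha]
    simp [mul_assoc]
  refine ⟨ν.eraseIdx q, ?_, hprod⟩
  rw [CoxeterSystem.IsReduced, hprod, hν.eq]
  simp only [List.length_append, List.length_eraseIdx_of_lt hq, length_alternatingWord]
  omega

theorem exists_isReduced_append_alternatingWord {i j : B} {w : W} (hi : cs.IsRightDescent w i)
    (hj : cs.IsRightDescent w j) {k : ℕ} (hk : M i j = 0 ∨ k ≤ M i j) :
    ∃ ν : List B, cs.IsReduced (ν ++ alternatingWord i j k) ∧
      cs.wordProd (ν ++ alternatingWord i j k) = w := by
  induction k generalizing i j with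
  | zero =>
    obtain ⟨ν, hν, rfl⟩ := cs.exists_isReduced w
    exact ⟨ν, by simpa [alternatingWord], by simp [alternatingWord]⟩
  | succ k ih =>
    rw [M.symmetric] at hk
    obtain ⟨ν, hν, rfl⟩ := ih hj hi (hk.imp_right Nat.le_of_lt)
    exact exists_isReduced_append_alternatingWord_succ cs hk hν hj

theorem coxeterMatrix_ne_zero_of_isRightDescent {i j : B} {w : W} (hi : cs.IsRightDescent w i)
    (hj : cs.IsRightDescent w j) : M i j ≠ 0 := by
  intro h0
  obtain ⟨ν, hν, hw⟩ :=
    exists_isReduced_append_alternatingWord cs hi hj (k := cs.length w + 1) (.inl h0)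
  have hlen := hν.eq
  rw [hw, List.length_append, length_alternatingWord] at hlen
  omega

theorem exists_isReduced_append_braidWord {i j : B} {w : W} (hi : cs.IsRightDescent w i)
    (hj : cs.IsRightDescent w j) :
    ∃ ν : List B, cs.IsReduced (ν ++ braidWord M i j) ∧ cs.IsReduced (ν ++ braidWord M j i) ∧
      cs.wordProd (ν ++ braidWord M i j) = w ∧ cs.wordProd (ν ++ braidWord M j i) = w := by
  obtain ⟨ν, hν, rfl⟩ := exists_isReduced_append_alternatingWord cs hi hj (.inr le_rfl)
  have hprod : cs.wordProd (ν ++ braidWord M j i) = cs.wordProd (ν ++ braidWord M i j) := by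
    rw [cs.wordProd_append, cs.wordProd_braidWord_eq, ← cs.wordProd_append]
  refine ⟨ν, hν, ?_, rfl, hprod⟩
  rw [CoxeterSystem.IsReduced, hprod, hν.eq, braidWord]
  simp [M.symmetric]

theorem exists_braidWord_eq_concat {i j : B} (h : M i j ≠ 0) :
    ∃ α : List B, braidWord M i j = α ++ [j] := by
  obtain ⟨m, hm⟩ := Nat.exists_eq_succ_of_ne_zero h
  exact ⟨alternatingWord j i m, by
    rw [braidWord, hm, alternatingWord_succ, List.concat_eq_append]⟩

theorem isReduced_of_isReduced_concat {ω : List B} {i : B} (hω : cs.IsReduced (ω ++ [i])) :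
    cs.IsReduced ω := by
  simpa using hω.take ω.length

theorem length_wordProd_add_one_of_isReduced_concat {ω : List B} {i : B}
    (hω : cs.IsReduced (ω ++ [i])) :
    cs.length (cs.wordProd ω) + 1 = cs.length (cs.wordProd (ω ++ [i])) := by
  rw [hω.eq, (isReduced_of_isReduced_concat cs hω).eq, List.length_append, List.length_singleton]

theorem isRightDescent_of_isReduced_concat {ω : List B} {i : B} (hω : cs.IsReduced (ω ++ [i])) :
    cs.IsRightDescent (cs.wordProd (ω ++ [i])) i := by
  rw [cs.isRightDescent_iff, ← length_wordProd_add_one_of_isReduced_concat cs hω,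
    cs.wordProd_append, cs.wordProd_singleton, cs.simple_mul_simple_cancel_right]

theorem prod_map_eq_of_isReduced {G : Type*} [Monoid G] {f : B → G}
    (hf : ∀ i j, ((braidWord M i j).map f).prod = ((braidWord M j i).map f).prod)
    {ω ω' : List B} (hω : cs.IsReduced ω) (hω' : cs.IsReduced ω')
    (h : cs.wordProd ω = cs.wordProd ω') : (ω.map f).prod = (ω'.map f).prod := by
  induction hn : cs.length (cs.wordProd ω) generalizing ω ω' with
  | zero =>
    rw [List.eq_nil_of_length_eq_zero (hω.eq.symm.trans hn),
      List.eq_nil_of_length_eq_zero (hω'.eq.symm.trans (h ▸ hn))]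
  | succ n ih =>
    have hlast {ν ν' : List B} {i : B} (hν : cs.IsReduced (ν ++ [i]))
        (hν' : cs.IsReduced (ν' ++ [i])) (hw : cs.wordProd (ν ++ [i]) = cs.wordProd ω)
        (hw' : cs.wordProd (ν' ++ [i]) = cs.wordProd ω) :
        ((ν ++ [i]).map f).prod = ((ν' ++ [i]).map f).prod := by
      have hlen := length_wordProd_add_one_of_isReduced_concat cs hν
      rw [hw, hn] at hlen
      have hνν' : cs.wordProd ν = cs.wordProd ν' := by
        simpa [cs.wordProd_append] using hw.trans hw'.symm
      rw [List.map_append, List.prod_append, List.map_append, List.prod_append,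
        ih (isReduced_of_isReduced_concat cs hν) (isReduced_of_isReduced_concat cs hν') hνν'
          (Nat.succ_injective hlen)]
    obtain rfl | ⟨ω, i, rfl⟩ := ω.eq_nil_or_concat'
    · simp at hn
    obtain rfl | ⟨ω', j, rfl⟩ := ω'.eq_nil_or_concat'
    · simp [h] at hn
    have hi := isRightDescent_of_isReduced_concat cs hω
    have hj := isRightDescent_of_isReduced_concat cs hω'
    rw [← h] at hj
    obtain ⟨α, hα⟩ := exists_braidWord_eq_concat (coxeterMatrix_ne_zero_of_isRightDescent cs hj hi)
    obtain ⟨β, hβ⟩ := exists_braidWord_eq_concat (coxeterMatrix_ne_zero_of_isRightDescent cs hi hj)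
    obtain ⟨ν, hν, hν', hw, hw'⟩ := exists_isReduced_append_braidWord cs hj hi
    calc ((ω ++ [i]).map f).prod
      _ = ((ν ++ braidWord M j i).map f).prod := by
        rw [hα, ← List.append_assoc] at hν hw ⊢
        exact hlast hω hν rfl hw
      _ = ((ν ++ braidWord M i j).map f).prod := by
        rw [List.map_append, List.prod_append, hf, ← List.prod_append, ← List.map_append]
      _ = ((ω' ++ [j]).map f).prod := by
        rw [hβ, ← List.append_assoc] at hν' hw' ⊢
        exact hlast hν' hω' hw' h.symm

end Matsumoto

-- Since `s * Δ = s * u * s' = Δ * s'`, a factor from `S` can be moved past any power of `Δ` and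
-- then completed to one more `Δ`.
theorem exists_mul_eq_pow_of_closure_eq_top {G : Type*} [Monoid G] {S : Set G} {Δ : G}
    (hS : Submonoid.closure S = ⊤)
    (hΔ : ∀ s ∈ S, ∃ u, ∃ s' ∈ S, s * u = Δ ∧ u * s' = Δ) (x : G) :
    ∃ (y : G) (m : ℕ), x * y = Δ ^ m := by
  have hswap (m : ℕ) (s : G) (hs : s ∈ S) : ∃ s' ∈ S, s * Δ ^ m = Δ ^ m * s' := by
    induction m with
    | zero => exact ⟨s, hs, by rw [pow_zero, mul_one, one_mul]⟩
    | succ m ih =>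
      obtain ⟨s', hs', h⟩ := ih
      obtain ⟨u, s'', hs'', hu, hu'⟩ := hΔ s' hs'
      have hΔs : s' * Δ = Δ * s'' := by
        calc s' * Δ
          _ = s' * (u * s'') := by rw [hu']
          _ = Δ * s'' := by rw [← mul_assoc, hu]
      refine ⟨s'', hs'', ?_⟩
      calc s * Δ ^ (m + 1)
        _ = Δ ^ m * (s' * Δ) := by rw [pow_succ, ← mul_assoc, h, mul_assoc]
        _ = Δ ^ m * (Δ * s'') := by rw [hΔs]
        _ = Δ ^ (m + 1) * s'' := by rw [pow_succ, mul_assoc]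
  induction x using Submonoid.induction_of_closure_eq_top_left hS with
  | one => exact ⟨1, 0, by rw [mul_one, pow_zero]⟩
  | mul_left s hs x ih =>
    obtain ⟨y, m, hy⟩ := ih
    obtain ⟨s', hs', h⟩ := hswap m s hs
    obtain ⟨u, -, -, hu, -⟩ := hΔ s' hs'
    refine ⟨y * u, m + 1, ?_⟩
    calc s * x * (y * u)
      _ = s * (x * y) * u := by simp only [mul_assoc]
      _ = Δ ^ m * (s' * u) := by rw [hy, h, mul_assoc]
      _ = Δ ^ (m + 1) := by rw [hu, pow_succ]

namespace ArtinTitsMonoid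

open CoxeterSystem

variable {B : Type*} {M : CoxeterMatrix B}

theorem mk'_eq_prod_map_atGen (a : FreeMonoid B) :
    (conGen (braidRel M)).mk' a = (a.toList.map (atGen M)).prod := by
  rw [← FreeMonoid.lift_apply]
  exact DFunLike.congr_fun (FreeMonoid.hom_eq fun i ↦ (FreeMonoid.lift_eval_of (atGen M) i).symm) a

theorem exists_prod_map_atGen_eq (x : ArtinTitsMonoid M) :
    ∃ ω : List B, (ω.map (atGen M)).prod = x := by
  obtain ⟨a, rfl⟩ := Con.mk'_surjective x
  exact ⟨a.toList, (mk'_eq_prod_map_atGen a).symm⟩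

theorem closure_range_atGen : Submonoid.closure (Set.range (atGen M)) = ⊤ := by
  refine (Submonoid.eq_top_iff' _).mpr fun x ↦ ?_
  obtain ⟨ω, rfl⟩ := exists_prod_map_atGen_eq x
  refine Submonoid.list_prod_mem _ fun a ha ↦ ?_
  obtain ⟨i, -, rfl⟩ := List.mem_map.mp ha
  exact Submonoid.subset_closure (Set.mem_range_self i)

-- `altWord i j m` starts with `i`, whereas `alternatingWord i j m` ends with `j`.
theorem toList_altWord (i j : B) (m : ℕ) :
    (altWord i j m).toList = if Even m then alternatingWord i j m else alternatingWord j i m := by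
  have hget (k : ℕ) (hk : k < (altWord i j m).toList.length) :
      (altWord i j m).toList[k] = if Even k then i else j := by
    simp [altWord, Nat.even_iff]
  split_ifs with hm
  all_goals
    refine List.ext_getElem (by simp [altWord]) fun k hk hk' ↦ ?_
    rw [length_alternatingWord] at hk'
    rw [hget, getElem_alternatingWord _ _ m k hk']
    grind

theorem prod_map_atGen_braidWord (i j : B) :
    ((braidWord M i j).map (atGen M)).prod = ((braidWord M j i).map (atGen M)).prod := by
  rcases eq_or_ne i j with rfl | hij
  · rfl
  have hrel : (conGen (braidRel M)).mk' (altWord i j (M i j)) =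
      (conGen (braidRel M)).mk' (altWord j i (M i j)) :=
    (Con.eq _).mpr (.of _ _ ⟨i, j, hij, rfl, rfl⟩)
  rw [mk'_eq_prod_map_atGen, mk'_eq_prod_map_atGen, toList_altWord, toList_altWord] at hrel
  rw [braidWord, braidWord, M.symmetric j i]
  split_ifs at hrel
  · exact hrel
  · exact hrel.symm

variable {W : Type*} [Group W] (cs : CoxeterSystem M W) {π : ArtinTitsMonoid M →* W}
  {len : ArtinTitsMonoid M → ℕ}

theorem map_prod_map_atGen (hπ : ∀ i, π (atGen M i) = cs.simple i) (ω : List B) :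
    π (ω.map (atGen M)).prod = cs.wordProd ω := by
  rw [map_list_prod, List.map_map, wordProd]
  exact congrArg _ (List.map_congr_left fun i _ ↦ hπ i)

theorem len_prod_map_atGen (hlen_mul : ∀ a b, len (a * b) = len a + len b)
    (hlen_gen : ∀ i, len (atGen M i) = 1) (ω : List B) :
    len (ω.map (atGen M)).prod = ω.length := by
  induction ω with
  | nil => simpa using hlen_mul 1 1
  | cons i ω ih => rw [List.map_cons, List.prod_cons, hlen_mul, hlen_gen, ih, List.length_cons,
      add_comm]

theorem prod_map_atGen_eq_of_isReduced (hπ : ∀ i, π (atGen M i) = cs.simple i)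
    (hlen_mul : ∀ a b, len (a * b) = len a + len b) (hlen_gen : ∀ i, len (atGen M i) = 1)
    {x : ArtinTitsMonoid M} (hx : len x = cs.length (π x)) {ω : List B} (hω : cs.IsReduced ω)
    (hωx : cs.wordProd ω = π x) : (ω.map (atGen M)).prod = x := by
  obtain ⟨ω', rfl⟩ := exists_prod_map_atGen_eq x
  rw [len_prod_map_atGen hlen_mul hlen_gen, map_prod_map_atGen cs hπ] at hx
  rw [map_prod_map_atGen cs hπ] at hωx
  exact prod_map_eq_of_isReduced cs prod_map_atGen_braidWord hω hx.symm hωx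

theorem exists_atGen_mul_eq_and_mul_atGen_eq (hπ : ∀ i, π (atGen M i) = cs.simple i)
    (hlen_mul : ∀ a b, len (a * b) = len a + len b) (hlen_gen : ∀ i, len (atGen M i) = 1)
    {Δ : ArtinTitsMonoid M} (hΔ : len Δ = cs.length (π Δ))
    (hmax : ∀ w, cs.length w ≤ cs.length (π Δ)) (i : B) :
    ∃ u j, atGen M i * u = Δ ∧ u * atGen M j = Δ := by
  obtain ⟨ω, hω, hωi⟩ := cs.exists_isReduced (cs.simple i * π Δ)
  obtain ⟨j, hj⟩ := exists_simple_mul_longest_eq_longest_mul_simple cs hmax i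
  have hlen : ω.length + 1 = cs.length (π Δ) := by
    rw [← hω.eq, ← hωi, length_simple_mul_longest_add_one cs hmax]
  have hΔω {ω' : List B} (hω' : cs.wordProd ω' = π Δ) (hlen' : ω'.length = ω.length + 1) :
      (ω'.map (atGen M)).prod = Δ :=
    prod_map_atGen_eq_of_isReduced cs hπ hlen_mul hlen_gen hΔ
      (by rw [CoxeterSystem.IsReduced, hω', hlen', hlen]) hω'
  refine ⟨(ω.map (atGen M)).prod, j, ?_, ?_⟩
  · rw [← List.prod_cons, ← List.map_cons]
    refine hΔω ?_ List.length_cons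
    rw [cs.wordProd_cons, ← hωi, cs.simple_mul_simple_cancel_left]
  · rw [← List.prod_concat, ← List.map_concat]
    refine hΔω ?_ List.length_concat
    rw [cs.wordProd_concat, ← hωi, hj, cs.simple_mul_simple_cancel_right]

end ArtinTitsMonoid

/-- For a finite Coxeter system, every positive braid left-divides a power of the
Garside element `Δ` (characterized by `ℓ(Δ) = ℓ(w₀)` and `π(Δ) = w₀`, where `π : B⁺ → W`
is the natural projection and `ℓ` the word length on `B⁺`). -/
theorem stmt13 {B W : Type*} [Group W] {M : CoxeterMatrix B} (cs : CoxeterSystem M W)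
    [Finite W]
    (π : ArtinTitsMonoid M →* W) (hπ : ∀ i : B, π (atGen M i) = cs.simple i)
    (len : ArtinTitsMonoid M → ℕ)
    (hlen_mul : ∀ a b : ArtinTitsMonoid M, len (a * b) = len a + len b)
    (hlen_gen : ∀ i : B, len (atGen M i) = 1)
    (w₀ : W) (hw₀ : ∀ w : W, cs.length w ≤ cs.length w₀)
    (Δ : ArtinTitsMonoid M)
    (hΔlen : len Δ = cs.length w₀) (hΔπ : π Δ = w₀)
    (x : ArtinTitsMonoid M) :
    ∃ (y : ArtinTitsMonoid M) (m : ℕ), x * y = Δ ^ m := by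
  refine exists_mul_eq_pow_of_closure_eq_top ArtinTitsMonoid.closure_range_atGen ?_ x
  rintro _ ⟨i, rfl⟩
  subst hΔπ
  obtain ⟨u, j, hu, hu'⟩ := ArtinTitsMonoid.exists_atGen_mul_eq_and_mul_atGen_eq cs hπ hlen_mul
    hlen_gen hΔlen hw₀ i
  exact ⟨u, atGen M j, Set.mem_range_self j, hu, hu'⟩
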